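/- Let ħ > 0, let V : ℝ → ℝ be a Schwartz function, let x ∈ ℝ, and let f : ℝ → ℂ be a Schwartz function. Then the second moment of the nonlocal Wigner potential term satisfies ∫_ℝ v^2 (Θ[V]f)(x,v) dv = 2 V'(x) ∫_ℝ v f(v) dv. -/

import Mathlib

open MeasureTheory Complex

/-- The one-dimensional nonlocal Wigner potential operator
`(Θ[V]f)(x,v) = (-i)/(2πℏ²) ∫ [V(x+y/2) - V(x-y/2)] e^{iyv/ℏ} (∫ f(w) e^{-iyw/ℏ} dw) dy`. -/
noncomputable def wignerTheta (ℏ : ℝ) (V : ℝ → ℝ) (f : ℝ → ℂ) (x v : ℝ) : ℂ :=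
  (-Complex.I) / (2 * Real.pi * ℏ ^ 2) *
    ∫ y : ℝ, ((V (x + y / 2) - V (x - y / 2) : ℝ) : ℂ) *
      Complex.exp (Complex.I * y * v / ℏ) *
      ∫ w : ℝ, f w * Complex.exp (-Complex.I * y * w / ℏ)

/-!
In the variable `v`, `Θ[V]` acts as a Fourier multiplier: substituting `y = 2πℏt` turns `Θ[V]f` into
`-i/ℏ` times the inverse Fourier transform of `D · 𝓕f`, where `D(t) = V(x + πℏt) - V(x - πℏt)`.
The second moment of an inverse Fourier transform is the second derivative of its argument at `0`,
up to `(-2πi)²`. Since `D` is odd, `(D · 𝓕f)''(0) = 2 D'(0) (𝓕f)'(0)`; here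
`D'(0) = 2πℏ V'(x)`, and `(𝓕f)'(0)` is `-2πi` times the first moment of `f`.
-/

open scoped FourierTransform SchwartzMap Real

section OddFunctions

variable {𝕜 : Type*} [NontriviallyNormedField 𝕜]

theorem iteratedDeriv_zero_eq_zero_of_odd {F : Type*} [NormedAddCommGroup F] [NormedSpace 𝕜 F]
    [IsAddTorsionFree F] {d : 𝕜 → F} (hd : Function.Odd d) {n : ℕ} (hn : Even n) :
    iteratedDeriv n d 0 = 0 := by
  have h := iteratedDeriv_comp_neg n d 0
  rw [funext hd, iteratedDeriv_fun_neg, hn.neg_one_pow, one_smul, neg_zero] at h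
  exact self_eq_neg.mp h.symm

theorem iteratedDeriv_two_mul_zero_of_odd {A : Type*} [NormedRing A] [NormedAlgebra 𝕜 A]
    [IsAddTorsionFree A] {d g : 𝕜 → A} (hd : Function.Odd d) (hd₂ : ContDiffAt 𝕜 2 d 0)
    (hg₂ : ContDiffAt 𝕜 2 g 0) :
    iteratedDeriv 2 (d * g) 0 = 2 * deriv d 0 * deriv g 0 := by
  rw [iteratedDeriv_mul hd₂ hg₂]
  simp [Finset.sum_range_succ, hd.map_zero, iteratedDeriv_zero_eq_zero_of_odd hd even_two,
    iteratedDeriv_one]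

end OddFunctions

section Moments

theorem integrable_pow_smul_schwartzMap {E : Type*} [NormedAddCommGroup E] [NormedSpace ℝ E]
    (f : 𝓢(ℝ, E)) (n : ℕ) :
    Integrable (fun v : ℝ ↦ v ^ n • f v) := by
  refine (f.integrable_pow_mul volume n).mono (by fun_prop) (.of_forall fun v ↦ ?_)
  simp [norm_smul]

variable {E : Type*} [NormedAddCommGroup E] [NormedSpace ℂ E]

theorem iteratedDeriv_fourier_zero {f : ℝ → E} {n : ℕ}
    (hf : ∀ m ≤ n, Integrable (fun v : ℝ ↦ v ^ m • f v)) :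
    iteratedDeriv n (𝓕 f) 0 = (-2 * π * I) ^ n • ∫ v : ℝ, v ^ n • f v := by
  rw [Real.iteratedDeriv_fourier (N := n) (fun m hm ↦ hf m (by exact_mod_cast hm)) le_rfl,
    Real.fourier_real_eq_integral_exp_smul, ← integral_smul]
  refine integral_congr_ae (.of_forall fun v ↦ ?_)
  simp only [mul_pow, mul_smul, ← ofReal_pow, Complex.coe_smul]
  simp

theorem integral_pow_smul_fourierInv [CompleteSpace E] (g : 𝓢(ℝ, E)) (n : ℕ) :
    (-2 * π * I) ^ n • ∫ v : ℝ, v ^ n • 𝓕⁻ (g : ℝ → E) v = iteratedDeriv n g 0 := by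
  rw [← SchwartzMap.fourierInv_coe,
    ← iteratedDeriv_fourier_zero fun m _ ↦ integrable_pow_smul_schwartzMap (𝓕⁻ g) m,
    ← SchwartzMap.fourier_coe, FourierTransform.fourier_fourierInv_eq]

end Moments

theorem integral_mul_exp_div_eq_fourier (ℏ : ℝ) (f : ℝ → ℂ) (y : ℝ) :
    ∫ w : ℝ, f w * exp (-I * y * w / ℏ) = 𝓕 f (y / (2 * π * ℏ)) := by
  rw [Real.fourier_real_eq_integral_exp_smul]
  refine integral_congr_ae (.of_forall fun w ↦ ?_)
  simp only [smul_eq_mul, mul_comm (f w)]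
  congr 2
  push_cast
  field_simp

/-- The symbol of the Wigner potential operator as a Fourier multiplier in the velocity, up to the
factor `-i/ℏ`. Its argument is the frequency `t = y / (2πℏ)` dual to `v` in the normalization
`exp (-2πitv)` of `𝓕`. -/
noncomputable def wignerSymbol (ℏ : ℝ) (V : ℝ → ℝ) (x t : ℝ) : ℂ :=
  ((V (x + π * ℏ * t) - V (x - π * ℏ * t) : ℝ) : ℂ)

theorem wignerSymbol_odd (ℏ : ℝ) (V : ℝ → ℝ) (x : ℝ) : Function.Odd (wignerSymbol ℏ V x) := by
  intro t
  simp [wignerSymbol, ← sub_eq_add_neg]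

theorem wignerSymbol_hasTemperateGrowth (ℏ : ℝ) {V : ℝ → ℝ} (hV : V.HasTemperateGrowth) (x : ℝ) :
    (wignerSymbol ℏ V x).HasTemperateGrowth := by
  have h_add : (fun t : ℝ ↦ x + π * ℏ * t).HasTemperateGrowth := by fun_prop
  have h_sub : (fun t : ℝ ↦ x - π * ℏ * t).HasTemperateGrowth := by fun_prop
  exact Function.Complex.hasTemperateGrowth_ofReal.comp ((hV.comp h_add).sub (hV.comp h_sub))

theorem deriv_wignerSymbol_zero (ℏ : ℝ) {V : ℝ → ℝ} {x : ℝ} (hV : DifferentiableAt ℝ V x) :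
    deriv (wignerSymbol ℏ V x) 0 = 2 * π * ℏ * (deriv V x : ℝ) := by
  have h_lin : HasDerivAt (fun t : ℝ ↦ π * ℏ * t) (π * ℏ) 0 := hasDerivAt_const_mul (π * ℏ)
  have h_add : HasDerivAt (fun t : ℝ ↦ V (x + π * ℏ * t)) (deriv V x * (π * ℏ)) 0 :=
    HasDerivAt.comp 0 (by simpa using hV.hasDerivAt) (h_lin.const_add x)
  have h_sub : HasDerivAt (fun t : ℝ ↦ V (x - π * ℏ * t)) (deriv V x * -(π * ℏ)) 0 :=
    HasDerivAt.comp 0 (by simpa using hV.hasDerivAt) (h_lin.const_sub x)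
  have h_symbol : HasDerivAt (wignerSymbol ℏ V x) _ 0 := (h_add.sub h_sub).ofReal_comp
  rw [h_symbol.deriv]
  push_cast
  ring

theorem iteratedDeriv_two_wignerSymbol_mul_zero (ℏ : ℝ) {V : ℝ → ℝ} (hV : V.HasTemperateGrowth)
    (x : ℝ) {g : ℝ → ℂ} (hg : ContDiffAt ℝ 2 g 0) :
    iteratedDeriv 2 (wignerSymbol ℏ V x * g) 0 = 4 * π * ℏ * (deriv V x : ℝ) * deriv g 0 := by
  have h_smooth : ContDiff ℝ 2 (wignerSymbol ℏ V x) :=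
    contDiff_infty.mp (wignerSymbol_hasTemperateGrowth ℏ hV x).1 2
  have hV_diff : Differentiable ℝ V := hV.1.differentiable (by simp)
  rw [iteratedDeriv_two_mul_zero_of_odd (wignerSymbol_odd ℏ V x) h_smooth.contDiffAt hg,
    deriv_wignerSymbol_zero ℏ (hV_diff x)]
  ring

theorem wignerTheta_eq_fourierInv {ℏ : ℝ} (hℏ : 0 < ℏ) (V : ℝ → ℝ) (f : ℝ → ℂ) (x v : ℝ) :
    wignerTheta ℏ V f x v = -I / ℏ * 𝓕⁻ (wignerSymbol ℏ V x * 𝓕 f) v := by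
  have hℏ' : (ℏ : ℂ) ≠ 0 := ofReal_ne_zero.mpr hℏ.ne'
  have hc : 0 < 2 * π * ℏ := by positivity
  let K (y : ℝ) : ℂ := ((V (x + y / 2) - V (x - y / 2) : ℝ) : ℂ) * exp (I * y * v / ℏ) *
    ∫ w : ℝ, f w * exp (-I * y * w / ℏ)
  have hK (t : ℝ) : K (2 * π * ℏ * t) =
      exp ((2 * π * inner ℝ t v : ℝ) * I) • (wignerSymbol ℏ V x * 𝓕 f) t := by
    have h_half : 2 * π * ℏ * t / 2 = π * ℏ * t := by ring
    have h_exp : I * (2 * π * ℏ * t : ℝ) * v / ℏ = (2 * π * inner ℝ t v : ℝ) * I := by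
      simp only [RCLike.inner_apply, conj_trivial]
      push_cast
      field_simp
    simp only [K, Pi.mul_apply, smul_eq_mul, wignerSymbol, h_half, h_exp,
      integral_mul_exp_div_eq_fourier, mul_div_cancel_left₀ t hc.ne']
    ring
  have h_subst : 𝓕⁻ (wignerSymbol ℏ V x * 𝓕 f) v = (2 * π * ℏ : ℝ)⁻¹ • ∫ y : ℝ, K y := by
    rw [Real.fourierInv_eq', ← abs_of_pos (inv_pos.mpr hc),
      ← Measure.integral_comp_mul_left K (2 * π * ℏ)]
    simp only [hK]
  calc wignerTheta ℏ V f x v = -I / (2 * π * ℏ ^ 2) * ∫ y : ℝ, K y := rfl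
    _ = -I / ℏ * ((2 * π * ℏ : ℝ)⁻¹ • ∫ y : ℝ, K y) := by
      rw [real_smul]
      push_cast
      field_simp
    _ = -I / ℏ * 𝓕⁻ (wignerSymbol ℏ V x * 𝓕 f) v := by rw [h_subst]

theorem integral_sq_mul_fourierInv_wignerSymbol_mul (ℏ : ℝ) {V : ℝ → ℝ}
    (hV : V.HasTemperateGrowth) (x : ℝ) (f : 𝓢(ℝ, ℂ)) :
    ∫ v : ℝ, (v : ℂ) ^ 2 * 𝓕⁻ (wignerSymbol ℏ V x * 𝓕 (f : ℝ → ℂ)) v =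
      2 * I * ℏ * (deriv V x : ℝ) * ∫ v : ℝ, v * f v := by
  let g : 𝓢(ℝ, ℂ) := SchwartzMap.smulLeftCLM ℂ (wignerSymbol ℏ V x) (𝓕 f)
  have hg : (g : ℝ → ℂ) = wignerSymbol ℏ V x * 𝓕 (f : ℝ → ℂ) :=
    SchwartzMap.smulLeftCLM_apply (wignerSymbol_hasTemperateGrowth ℏ hV x) (𝓕 f)
  have hf_smooth : ContDiffAt ℝ 2 (𝓕 (f : ℝ → ℂ)) 0 := ((𝓕 f).smooth 2).contDiffAt
  have h_second := integral_pow_smul_fourierInv g 2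
  have h_first : deriv (𝓕 (f : ℝ → ℂ)) 0 = -2 * π * I * ∫ v : ℝ, v * f v := by
    simpa using iteratedDeriv_fourier_zero (n := 1) fun m _ ↦ integrable_pow_smul_schwartzMap f m
  rw [hg, iteratedDeriv_two_wignerSymbol_mul_zero ℏ hV x hf_smooth, h_first] at h_second
  have hc : (-2 * π * I : ℂ) ^ 2 ≠ 0 := by simp [Real.pi_ne_zero]
  refine mul_left_cancel₀ hc ?_
  simp only [smul_eq_mul, real_smul, ofReal_pow] at h_second
  rw [h_second]
  linear_combination (-8 * π ^ 2 * I * ℏ * (deriv V x : ℝ) * ∫ v : ℝ, v * f v) * I_sq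

theorem wignerTheta_second_moment_general {ℏ : ℝ} (hℏ : 0 < ℏ) {V : ℝ → ℝ}
    (hV : V.HasTemperateGrowth) (x : ℝ) (f : 𝓢(ℝ, ℂ)) :
    ∫ v : ℝ, (v : ℂ) ^ 2 * wignerTheta ℏ V f x v =
      2 * (deriv V x : ℝ) * ∫ v : ℝ, (v : ℂ) * f v := by
  have hℏ' : (ℏ : ℂ) ≠ 0 := ofReal_ne_zero.mpr hℏ.ne'
  simp only [wignerTheta_eq_fourierInv hℏ, mul_left_comm _ (-I / (ℏ : ℂ))]
  rw [integral_const_mul, integral_sq_mul_fourierInv_wignerSymbol_mul ℏ hV x f]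
  field_simp
  linear_combination (-(deriv V x : ℝ) * ∫ v : ℝ, (v : ℂ) * f v) * I_sq

/-- For a Schwartz potential `V` and a Schwartz function `f`, the second moment of the
nonlocal Wigner potential term satisfies `∫ v² (Θ[V]f)(x,v) dv = 2 V'(x) ∫ v f(v) dv`. -/
theorem wignerTheta_second_moment (ℏ : ℝ) (hℏ : 0 < ℏ) (V : SchwartzMap ℝ ℝ) (x : ℝ)
    (f : SchwartzMap ℝ ℂ) :
    (∫ v : ℝ, (v : ℂ) ^ 2 * wignerTheta ℏ (⇑V) (⇑f) x v) =
      2 * ((deriv (⇑V) x : ℝ) : ℂ) * ∫ v : ℝ, (v : ℂ) * f v :=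
  wignerTheta_second_moment_general hℏ V.hasTemperateGrowth x f
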